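/- Let D be a domain in ℂⁿ and let φ be a psh peak function for a point p ∈ ∂D. Then for any bounded open neighborhood U of p there exist an open neighborhood V ⊂ U of p and a constant m > 0 such that for all z ∈ D ∩ V and all X ∈ ℂⁿ one has K_D(z;X) ≥ e^{mφ(z)} K_{D∩U}(z;X). -/

import Mathlib

open Set Metric Filter Topology
open scoped Classical

noncomputable section

/-- `ℂⁿ` with the Euclidean norm. -/
abbrev Cn (n : ℕ) := EuclideanSpace ℂ (Fin n)

/-- A function `u : ℂⁿ → [-∞,∞)` (with values in `EReal`) is plurisubharmonic on `D` if it
is upper semicontinuous on `D` and satisfies the sub-mean-value inequality on every closed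
disc in a complex line contained in `D` (stated via continuous majorants on the boundary
circle, so as to handle the value `-∞`). -/
def PSHOn {n : ℕ} (u : Cn n → EReal) (D : Set (Cn n)) : Prop :=
  UpperSemicontinuousOn u D ∧
  ∀ a ∈ D, ∀ b : Cn n, ∀ r : ℝ, 0 < r →
    (∀ t : ℂ, ‖t‖ ≤ r → a + t • b ∈ D) →
    ∀ g : ℝ → ℝ, Continuous g →
      (∀ θ : ℝ, u (a + ((r : ℂ) * Complex.exp (θ * Complex.I)) • b) ≤ (g θ : EReal)) →
      u a ≤ (((1 / (2 * Real.pi)) * ∫ θ in (0:ℝ)..(2 * Real.pi), g θ : ℝ) : EReal)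

/-- `φ` is a plurisubharmonic peak function for `D` at the boundary point `p`:
`φ` is psh on `D`, `φ(z) → 0` as `z → p` in `D`, and `sup_{D∖U} φ < 0` for every
neighborhood `U` of `p`. -/
def IsPshPeakFn {n : ℕ} (D : Set (Cn n)) (p : Cn n) (φ : Cn n → EReal) : Prop :=
  PSHOn φ D ∧ Tendsto φ (𝓝[D] p) (𝓝 (0 : EReal)) ∧
  ∀ U ∈ 𝓝 p, ∃ c : ℝ, c < 0 ∧ ∀ z ∈ D \ U, φ z ≤ (c : EReal)

/-- The real exponential extended to `EReal`, with `exp(-∞) = 0` (the value at `⊤`,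
irrelevant here, is also set to `0`). -/
def erexp (x : EReal) : ℝ := if x = ⊥ then 0 else if x = ⊤ then 0 else Real.exp x.toReal

/-- The Kobayashi metric of `D`:
`K_D(z;X) = inf {|α| : ∃ f : 𝔻 → D holomorphic, f 0 = z, α • f' 0 = X}`. -/
def kobayashi {n : ℕ} (D : Set (Cn n)) (z X : Cn n) : ℝ :=
  sInf {c : ℝ | ∃ α : ℂ, c = ‖α‖ ∧ ∃ f : ℂ → Cn n,
    DifferentiableOn ℂ f (ball (0:ℂ) 1) ∧ MapsTo f (ball (0:ℂ) 1) D ∧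
    f 0 = z ∧ α • deriv f 0 = X}

/-!
Let `u` be the peak function truncated below at `-1`, and `f` an analytic disc centred close to `p`.
The function `u ∘ f - log ‖·‖` has a pole at `0`; near `p` it can be replaced by a multiple of
`u ∘ f` plus the logarithm of the difference quotient of `f`, and since `u` is close to `0` near `p`
but bounded away from it elsewhere, the two pieces glue to a subharmonic function. The maximum
principle shows that `f` maps a disc of uniform radius `κ` into `U`. If `f l ∉ U`, then recentring
`f` at `l` by a Möbius map gives a disc sending `‖ζ‖ < κ` outside a neighbourhood of `p`, where `u`
is below a negative constant; comparing `u ∘ f` with a multiple of `log ‖·‖` on the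
remaining annulus yields `‖l‖ ≥ exp (m * u (f 0))`. So `f` maps the disc of that radius into `U`,
and rescaling gives the estimate of the metrics.

Subharmonicity is used in the viscosity sense, because composition with holomorphic discs and
gluing are then local statements.
-/

open scoped ComplexConjugate

/-- Subharmonicity of a real function at a point of `ℂ`, in the viscosity sense: the function is
upper semicontinuous and cannot be touched from above by a strictly superharmonic test function
`Re k - ε‖·‖² + const` with `k` holomorphic. Unlike the mean value inequality, this notion is
local, so it passes to glued functions. -/
structure IsSubharmonicAt (S : ℂ → ℝ) (x : ℂ) : Prop where
  usc : UpperSemicontinuousAt S x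
  not_isLocalMax : ∀ k : ℂ → ℂ, AnalyticAt ℂ k x → ∀ ε : ℝ, 0 < ε →
    ¬ IsLocalMax (fun y => S y + ε * ‖y‖ ^ 2 - (k y).re) x

namespace IsSubharmonicAt

variable {S T : ℂ → ℝ} {x : ℂ}

lemma congr (hS : IsSubharmonicAt S x) (h : S =ᶠ[𝓝 x] T) : IsSubharmonicAt T x where
  usc t ht := by
    filter_upwards [h, hS.usc t (h.eq_of_nhds.trans_lt ht)] with y hy hyt using hy.symm.trans_lt hyt
  not_isLocalMax k hk ε hε hmax :=
    hS.not_isLocalMax k hk ε hε <| hmax.congr <| h.mono fun y hy => by simp only [hy]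

lemma add_of_re_le (hS : IsSubharmonicAt S x) (hT : UpperSemicontinuousAt T x) {h : ℂ → ℂ}
    (hh : AnalyticAt ℂ h x) (hle : ∀ᶠ y in 𝓝 x, T x + (h y - h x).re ≤ T y) :
    IsSubharmonicAt (fun y => S y + T y) x where
  usc := hS.usc.add hT
  not_isLocalMax k hk ε hε hmax := by
    refine hS.not_isLocalMax (fun y => k y - h y) (hk.sub hh) ε hε ?_
    filter_upwards [hle, hmax] with y hy hmaxy
    simp only [Complex.sub_re] at hy hmaxy ⊢
    linarith

lemma add_const (hS : IsSubharmonicAt S x) (c : ℝ) : IsSubharmonicAt (fun y => S y + c) x :=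
  hS.add_of_re_le upperSemicontinuousAt_const (analyticAt_const (v := 0))
    (Eventually.of_forall fun _ => by simp)

lemma const_mul (hS : IsSubharmonicAt S x) {M : ℝ} (hM : 0 < M) :
    IsSubharmonicAt (fun y => M * S y) x where
  usc := (continuous_const_mul M).continuousAt.comp_upperSemicontinuousAt hS.usc
    (monotone_mul_left_of_nonneg hM.le)
  not_isLocalMax k hk ε hε hmax := by
    refine hS.not_isLocalMax (fun y => (M⁻¹ : ℝ) * k y) (analyticAt_const.mul hk) (M⁻¹ * ε)
      (by positivity) ?_
    filter_upwards [hmax] with y hy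
    have hrescale (y : ℂ) : S y + M⁻¹ * ε * ‖y‖ ^ 2 - ((M⁻¹ : ℝ) * k y).re
        = M⁻¹ * (M * S y + ε * ‖y‖ ^ 2 - (k y).re) := by
      rw [Complex.re_ofReal_mul]
      field_simp
    rw [hrescale, hrescale]
    exact mul_le_mul_of_nonneg_left hy (inv_pos.2 hM).le

lemma max (hS : IsSubharmonicAt S x) (hT : IsSubharmonicAt T x) :
    IsSubharmonicAt (fun y => max (S y) (T y)) x where
  usc := hS.usc.sup hT.usc
  not_isLocalMax k hk ε hε hmax := by
    rcases le_total (S x) (T x) with h | h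
    · refine hT.not_isLocalMax k hk ε hε ?_
      filter_upwards [hmax] with y hy
      rw [max_eq_right h] at hy
      linarith [le_max_right (S y) (T y)]
    · refine hS.not_isLocalMax k hk ε hε ?_
      filter_upwards [hmax] with y hy
      rw [max_eq_left h] at hy
      linarith [le_max_left (S y) (T y)]

lemma add_mul_log_norm (hS : IsSubharmonicAt S x) (hx : x ≠ 0) (a : ℝ) :
    IsSubharmonicAt (fun y => S y + a * Real.log ‖y‖) x := by
  have hcont : ContinuousAt (fun y : ℂ => a * Real.log ‖y‖) x :=
    (continuousAt_id.norm.log (norm_ne_zero_iff.2 hx)).const_mul a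
  have hlog : AnalyticAt ℂ (fun y => (a : ℂ) * Complex.log (y / x)) x :=
    analyticAt_const.mul ((analyticAt_id.div analyticAt_const hx).clog (by simp [hx]))
  refine hS.add_of_re_le hcont.upperSemicontinuousAt hlog ?_
  filter_upwards [isOpen_ne.mem_nhds hx] with y hy
  apply le_of_eq
  rw [div_self hx, Complex.log_one, mul_zero, sub_zero, Complex.re_ofReal_mul, Complex.log_re,
    norm_div, Real.log_div (norm_ne_zero_iff.2 hy) (norm_ne_zero_iff.2 hx)]
  ring

/-- By Cauchy–Schwarz, `log (1 + ‖g‖²)` is supported from below at `x` by twice the real part of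
the holomorphic function `log (1 + ⟪g x, g ·⟫)`, up to a constant. -/
lemma add_log_one_add_sq_norm {E : Type*} [NormedAddCommGroup E] [InnerProductSpace ℂ E]
    (hS : IsSubharmonicAt S x) {g : ℂ → E} (hg : AnalyticAt ℂ g x) :
    IsSubharmonicAt (fun y => S y + Real.log (1 + ‖g y‖ ^ 2) / 2) x := by
  have hpos (y : ℂ) : 0 < 1 + ‖g y‖ ^ 2 := by positivity
  have hcont : ContinuousAt (fun y => Real.log (1 + ‖g y‖ ^ 2) / 2) x :=
    ((continuousAt_const.add (hg.continuousAt.norm.pow 2)).log (hpos x).ne').div_const 2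
  set q : ℂ → ℂ := fun y => 1 + inner ℂ (g x) (g y) with hq
  have hq_analytic : AnalyticAt ℂ q x :=
    analyticAt_const.add (((innerSL ℂ (g x)).analyticAt _).comp hg)
  have hqx : q x = ((1 + ‖g x‖ ^ 2 : ℝ) : ℂ) := by
    simp [hq, inner_self_eq_norm_sq_to_K]
  have hqx_slit : q x ∈ Complex.slitPlane := hqx ▸ Complex.ofReal_mem_slitPlane.2 (hpos x)
  have cauchy_schwarz (y : ℂ) : ‖q y‖ ^ 2 ≤ (1 + ‖g x‖ ^ 2) * (1 + ‖g y‖ ^ 2) := by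
    have hle : ‖q y‖ ≤ 1 + ‖g x‖ * ‖g y‖ :=
      (norm_add_le _ _).trans (by simpa using norm_inner_le_norm (g x) (g y))
    nlinarith [pow_le_pow_left₀ (norm_nonneg _) hle 2, sq_nonneg (‖g x‖ - ‖g y‖)]
  refine hS.add_of_re_le hcont.upperSemicontinuousAt (hq_analytic.clog hqx_slit) ?_
  filter_upwards [hq_analytic.continuousAt.eventually_mem
    (Complex.isOpen_slitPlane.mem_nhds hqx_slit)] with y hy
  have hqy : 0 < ‖q y‖ := norm_pos_iff.2 (Complex.slitPlane_ne_zero hy)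
  have hlog := Real.log_le_log (by positivity) (cauchy_schwarz y)
  rw [Real.log_pow, Real.log_mul (hpos x).ne' (hpos y).ne', Nat.cast_ofNat] at hlog
  rw [Complex.sub_re, Complex.log_re, Complex.log_re, hqx, Complex.norm_real,
    Real.norm_of_nonneg (hpos x).le]
  linarith

lemma le_of_forall_frontier_le {K : Set ℂ} {C : ℝ} (hK : IsCompact K)
    (husc : UpperSemicontinuousOn S K) (hS : ∀ y ∈ interior K, IsSubharmonicAt S y)
    (hC : ∀ y ∈ frontier K, S y ≤ C) (hx : x ∈ K) : S x ≤ C := by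
  by_contra! hlt
  obtain ⟨B, hB⟩ := hK.isBounded.exists_norm_le
  obtain ⟨ε, hε, hεB⟩ : ∃ ε > 0, ε * B ^ 2 < S x - C :=
    ((continuous_mul_const (B ^ 2)).tendsto' 0 0 (zero_mul _)).eventually
      (gt_mem_nhds (sub_pos.2 hlt)) |>.exists_gt
  have husc' : UpperSemicontinuousOn (fun y => S y + ε * ‖y‖ ^ 2) K :=
    husc.add (by fun_prop : ContinuousOn (fun y : ℂ => ε * ‖y‖ ^ 2) K).upperSemicontinuousOn
  obtain ⟨y, hyK, hmax⟩ := husc'.exists_isMaxOn ⟨x, hx⟩ hK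
  by_cases hy : y ∈ interior K
  · refine (hS y hy).not_isLocalMax 0 analyticAt_const ε hε ?_
    simpa using hmax.isLocalMax (mem_interior_iff_mem_nhds.1 hy)
  · have hyC : S y ≤ C := hC y (hK.isClosed.frontier_eq ▸ ⟨hyK, hy⟩)
    have hyB : ε * ‖y‖ ^ 2 ≤ ε * B ^ 2 := by gcongr; exact hB y hyK
    have hxy : S x + ε * ‖x‖ ^ 2 ≤ S y + ε * ‖y‖ ^ 2 := hmax hx
    have : 0 ≤ ε * ‖x‖ ^ 2 := by positivity
    linarith

lemma piecewise {A B ψ : ℂ → ℝ} {δ' δ r R : ℝ} (hψ : ContinuousAt ψ x) (hδ' : δ' < δ)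
    (hδr : δ ≤ r) (hrR : r < R) (hB : ψ x < R → IsSubharmonicAt B x)
    (hA : δ ≤ ψ x → IsSubharmonicAt A x)
    (hAB : ∀ᶠ y in 𝓝 x, δ' < ψ y → ψ y < δ → A y ≤ B y)
    (hBA : ∀ᶠ y in 𝓝 x, r < ψ y → ψ y < R → B y ≤ A y) :
    IsSubharmonicAt
      (fun y => if ψ y < δ then B y else if ψ y < R then Max.max (A y) (B y) else A y) x := by
  rcases lt_or_ge (ψ x) δ with hlt | hge
  · refine (hB (by linarith)).congr ?_
    filter_upwards [hψ.eventually (gt_mem_nhds hlt)] with y hy using (if_pos hy).symm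
  rcases lt_or_ge (ψ x) R with hlt' | hge'
  · refine ((hA hge).max (hB hlt')).congr ?_
    filter_upwards [hAB, hψ.eventually (lt_mem_nhds (hδ'.trans_le hge)),
      hψ.eventually (gt_mem_nhds hlt')] with y hy hyδ' hyR
    split_ifs with hyδ
    · exact max_eq_right (hy hyδ' hyδ)
    · rfl
  · refine (hA hge).congr ?_
    filter_upwards [hBA, hψ.eventually (lt_mem_nhds (hrR.trans_le hge'))] with y hy hyr
    split_ifs with hyδ hyR
    · linarith
    · exact (max_eq_left (hy hyr hyR)).symm
    · rfl

/-- The maximum principle for the function equal to `B` where `ψ < δ`, to `max A B` where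
`δ ≤ ψ < R` and to `A` where `R ≤ ψ`. -/
lemma le_of_forall_frontier_le_of_piecewise {A B ψ : ℂ → ℝ} {K Ω : Set ℂ} {δ' δ r R C : ℝ}
    (hK : IsCompact K) (hΩ : IsOpen Ω) (hKΩ : K ⊆ Ω) (hψ : ContinuousOn ψ Ω) (hδ' : δ' < δ)
    (hδr : δ ≤ r) (hrR : r < R) (hB : ∀ y ∈ Ω, ψ y < R → IsSubharmonicAt B y)
    (hA : ∀ y ∈ Ω, δ ≤ ψ y → IsSubharmonicAt A y)
    (hAB : ∀ y ∈ Ω, δ' < ψ y → ψ y < δ → A y ≤ B y)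
    (hBA : ∀ y ∈ Ω, r < ψ y → ψ y < R → B y ≤ A y)
    (hBC : ∀ y ∈ frontier K, ψ y < R → B y ≤ C) (hAC : ∀ y ∈ frontier K, δ ≤ ψ y → A y ≤ C)
    (hx : x ∈ K) (hRx : R ≤ ψ x) : A x ≤ C := by
  set Ψ : ℂ → ℝ := fun y => if ψ y < δ then B y else if ψ y < R then Max.max (A y) (B y) else A y
    with hΨ
  have hsub : ∀ y ∈ K, IsSubharmonicAt Ψ y := fun y hy =>
    have hΩy := hΩ.mem_nhds (hKΩ hy)
    piecewise (hψ.continuousAt hΩy) hδ' hδr hrR (hB y (hKΩ hy)) (hA y (hKΩ hy))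
      (mem_of_superset hΩy hAB) (mem_of_superset hΩy hBA)
  have hfrontier : ∀ y ∈ frontier K, Ψ y ≤ C := by
    intro y hy
    simp only [hΨ]
    split_ifs with hyδ hyR
    · exact hBC y hy (by linarith)
    · exact max_le (hAC y hy (not_lt.1 hyδ)) (hBC y hy hyR)
    · exact hAC y hy (not_lt.1 hyδ)
  have hΨx : Ψ x = A x := by
    simp only [hΨ]
    rw [if_neg (by linarith), if_neg hRx.not_gt]
  exact hΨx ▸ le_of_forall_frontier_le hK
    (fun y hy => (hsub y hy).usc.upperSemicontinuousWithinAt K)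
    (fun y hy => hsub y (interior_subset hy)) hfrontier hx

/-- The maximum principle for `S - a log ‖·‖` on annuli with outer radius tending to `1`. -/
lemma le_mul_log_norm {s a : ℝ} (hs : 0 < s) (ha : 0 ≤ a)
    (hS : ∀ y ∈ ball 0 1, IsSubharmonicAt S y) (hnonpos : ∀ y ∈ ball 0 1, S y ≤ 0)
    (hinner : ∀ y ∈ ball 0 1, ‖y‖ = s → S y ≤ a * Real.log s) (hsx : s ≤ ‖x‖) (hx : ‖x‖ < 1) :
    S x ≤ a * Real.log ‖x‖ := by
  have annulus : ∀ ρ ∈ Ioo ‖x‖ 1, S x + -a * Real.log ‖x‖ ≤ -a * Real.log ρ := by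
    rintro ρ ⟨hxρ, hρ1⟩
    have hclosed : IsClosed {y : ℂ | s ≤ ‖y‖} := isClosed_le continuous_const continuous_norm
    have hSlog : ∀ y ∈ closedBall 0 ρ ∩ {y : ℂ | s ≤ ‖y‖},
        IsSubharmonicAt (fun y => S y + -a * Real.log ‖y‖) y := fun y hy =>
      (hS y (closedBall_subset_ball hρ1 hy.1)).add_mul_log_norm
        (norm_pos_iff.1 (hs.trans_le hy.2)) _
    refine le_of_forall_frontier_le ((isCompact_closedBall 0 ρ).inter_right hclosed)
      (fun y hy => (hSlog y hy).usc.upperSemicontinuousWithinAt _)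
      (fun y hy => hSlog y (interior_subset hy)) (fun y hy => ?_)
      ⟨mem_closedBall_zero_iff.2 hxρ.le, hsx⟩
    have hyK := ((isClosed_closedBall.inter hclosed).frontier_subset hy)
    have hy1 := closedBall_subset_ball hρ1 hyK.1
    rcases frontier_inter_subset _ _ hy with ⟨h, -⟩ | ⟨-, h⟩
    · have hyρ : ‖y‖ = ρ := by simpa using frontier_closedBall_subset_sphere h
      rw [hyρ]
      linarith [hnonpos y hy1]
    · have hys : s = ‖y‖ := frontier_le_subset_eq continuous_const continuous_norm h
      have := hinner y hy1 hys.symm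
      have := mul_nonpos_of_nonneg_of_nonpos ha (Real.log_nonpos (by linarith) hρ1.le)
      rw [← hys]
      linarith
  have hlim : Tendsto (fun ρ => -a * Real.log ρ) (𝓝[<] 1) (𝓝 0) := by
    have hcont : ContinuousAt (fun ρ => -a * Real.log ρ) 1 :=
      (Real.continuousAt_log one_ne_zero).const_mul _
    simpa using hcont.tendsto.mono_left nhdsWithin_le_nhds
  have := ge_of_tendsto hlim (mem_of_superset (Ioo_mem_nhdsLT hx) annulus)
  linarith

end IsSubharmonicAt

lemma exists_isMaxOn_sub_mul {X : Type*} [TopologicalSpace X] {K W : Set X} {G P : X → ℝ}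
    (hK : IsCompact K) (hG : UpperSemicontinuousOn G K) (hP : ContinuousOn P K)
    (hP_nonneg : ∀ q ∈ K, 0 ≤ P q) (hW : IsOpen W) {x₀ : X} (hx₀ : x₀ ∈ K) (hPx₀ : P x₀ = 0)
    (hlt : ∀ q ∈ K \ W, P q = 0 → G q < G x₀) :
    ∃ N : ℝ, ∃ q ∈ K ∩ W, IsMaxOn (fun q => G q - N * P q) K q := by
  have husc (N : ℝ) : UpperSemicontinuousOn (fun q => G q - N * P q) K := by
    have hP_neg : ContinuousOn (fun q => -(N * P q)) K := by fun_prop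
    simpa only [sub_eq_add_neg] using hG.add hP_neg.upperSemicontinuousOn
  obtain ⟨N, hN⟩ : ∃ N, ∀ N' ≥ N, ∀ q ∈ K \ W, G q - N' * P q < G x₀ := by
    refine (hK.diff hW).induction_on
      (p := fun s => ∃ N, ∀ N' ≥ N, ∀ q ∈ s, G q - N' * P q < G x₀) ⟨0, by simp⟩ ?_ ?_ ?_
    · rintro s t hst ⟨N, hN⟩
      exact ⟨N, fun N' hN' q hq => hN N' hN' q (hst hq)⟩
    · rintro s t ⟨N₁, hN₁⟩ ⟨N₂, hN₂⟩
      refine ⟨max N₁ N₂, fun N' hN' q hq => ?_⟩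
      exact hq.elim (hN₁ N' ((le_max_left _ _).trans hN') q)
        (hN₂ N' ((le_max_right _ _).trans hN') q)
    · intro q hq
      obtain ⟨N, hN⟩ : ∃ N, G q - N * P q < G x₀ := by
        rcases (hP_nonneg q hq.1).eq_or_lt with h | h
        · exact ⟨0, by simpa using hlt q hq h.symm⟩
        · exact ⟨(G q - G x₀ + 1) / P q, by rw [div_mul_cancel₀ _ h.ne']; linarith⟩
      have hnear : ∀ᶠ q' in 𝓝[K \ W] q, q' ∈ K ∧ G q' - N * P q' < G x₀ :=
        (eventually_mem_nhdsWithin.mono fun _ h => h.1).and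
          ((husc N q hq.1 _ hN).filter_mono (nhdsWithin_mono q sdiff_subset))
      refine ⟨_, hnear, N, fun N' hN' q' ⟨hq', hlt'⟩ => ?_⟩
      linarith [mul_le_mul_of_nonneg_right hN' (hP_nonneg q' hq')]
  obtain ⟨q, hq, hmax⟩ := (husc N).exists_isMaxOn ⟨x₀, hx₀⟩ hK
  refine ⟨N, q, ⟨hq, ?_⟩, hmax⟩
  by_contra hqW
  have hle : G x₀ - N * P x₀ ≤ G q - N * P q := hmax hx₀
  rw [hPx₀] at hle
  linarith [hN N le_rfl q ⟨hq, hqW⟩]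

namespace PSHOn

variable {n : ℕ} {D : Set (Cn n)}

lemma le_of_harmonicOnNhd {u : Cn n → EReal} (hu : PSHOn u D) {a b : Cn n} {r : ℝ} (hr : 0 < r)
    (hD : ∀ t : ℂ, ‖t‖ ≤ r → a + t • b ∈ D) {H : ℂ → ℝ}
    (hH : InnerProductSpace.HarmonicOnNhd H (closedBall 0 r))
    (hle : ∀ t : ℂ, ‖t‖ = r → u (a + t • b) ≤ H t) : u a ≤ H 0 := by
  have hcircle (θ : ℝ) : ‖circleMap 0 r θ‖ = r := by simp [hr.le]
  have hcont : Continuous fun θ : ℝ => H (circleMap 0 r θ) :=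
    continuous_iff_continuousAt.2 fun θ =>
      (hH _ (mem_closedBall_zero_iff.2 (hcircle θ).le)).1.continuousAt.comp
        (continuous_circleMap 0 r).continuousAt
  have haverage : Real.circleAverage H 0 r = H 0 :=
    InnerProductSpace.HarmonicOnNhd.circleAverage_eq (by rwa [abs_of_pos hr])
  have hmean := hu.2 a (by simpa using hD 0 (by simpa using hr.le)) b r hr hD _ hcont fun θ => by
    simpa only [circleMap_zero] using hle _ (hcircle θ)
  rwa [one_div, ← smul_eq_mul, ← Real.circleAverage_def, haverage] at hmean

lemma upperSemicontinuousAt {u : Cn n → ℝ} (hu : PSHOn (fun w => (u w : EReal)) D)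
    (hD : IsOpen D) {w : Cn n} (hw : w ∈ D) : UpperSemicontinuousAt u w := fun t ht => by
  simpa [hD.nhdsWithin_eq hw] using hu.1 w hw t (EReal.coe_lt_coe_iff.2 ht)

lemma not_eventually_le {u : Cn n → ℝ} (hu : PSHOn (fun w => (u w : EReal)) D)
    (hD : IsOpen D) {w b : Cn n} (hw : w ∈ D) {h : ℂ → ℂ} (hh : AnalyticAt ℂ h 0) {ε : ℝ}
    (hε : 0 < ε) : ¬ ∀ᶠ t in 𝓝 (0 : ℂ), u (w + t • b) ≤ u w + (h t - h 0).re - ε * ‖t‖ ^ 2 := by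
  intro hbound
  have hmem : ∀ᶠ t in 𝓝 (0 : ℂ), w + t • b ∈ D :=
    (by fun_prop : Continuous fun t : ℂ => w + t • b).continuousAt.eventually_mem
      (hD.mem_nhds (by simpa using hw))
  obtain ⟨s, hs, hball⟩ := nhds_basis_closedBall.eventually_iff.1
    (hh.eventually_analyticAt.and (hbound.and hmem))
  have hle := hu.le_of_harmonicOnNhd (H := fun t => (h t + (u w - (h 0).re - ε * s ^ 2 : ℝ)).re) hs
    (fun t ht => (hball (mem_closedBall_zero_iff.2 ht)).2.2)
    (fun t ht => ((hball ht).1.add analyticAt_const).harmonicAt_re) fun t ht => by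
      have := (hball (mem_closedBall_zero_iff.2 ht.le)).2.1
      rw [ht, Complex.sub_re] at this
      rw [EReal.coe_le_coe_iff, Complex.add_re, Complex.ofReal_re]
      linarith
  rw [Complex.add_re, Complex.ofReal_re, EReal.coe_le_coe_iff] at hle
  have : 0 < ε * s ^ 2 := by positivity
  linarith

/-- Moving along `t ↦ (w + t • f' y, y + t)` changes the penalty `‖w - f y‖²` by the real part of a
holomorphic function, up to `o(‖t‖²)`; this error is absorbed by `ε * ‖y‖²`. -/
lemma not_isLocalMax_penalized {u : Cn n → ℝ} (hu : PSHOn (fun w => (u w : EReal)) D)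
    (hD : IsOpen D) {f : ℂ → Cn n} {k : ℂ → ℂ} {w : Cn n} {y : ℂ} (hw : w ∈ D)
    (hf : AnalyticAt ℂ f y) (hk : AnalyticAt ℂ k y) {ε : ℝ} (hε : 0 < ε) (N : ℝ) :
    ¬ IsLocalMax (fun q : Cn n × ℂ =>
      u q.1 + ε * ‖q.2‖ ^ 2 - (k q.2).re - N * ‖q.1 - f q.2‖ ^ 2) (w, y) := by
  intro hmax
  set b := deriv f y
  set d := w - f y with hd
  set e : ℂ → Cn n := fun t => f (y + t) - f y - t • b with he
  set h : ℂ → ℂ := fun t => k (y + t) - (2 * ε : ℝ) * (conj y * t)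
    - (2 * N : ℝ) * inner ℂ d (e t) with hh
  have hh_analytic : AnalyticAt ℂ h 0 := by
    have hadd : AnalyticAt ℂ (fun t => y + t) 0 := by fun_prop
    have hft : AnalyticAt ℂ (fun t => f (y + t)) 0 := hf.comp_of_eq hadd (add_zero y)
    have hkt : AnalyticAt ℂ (fun t => k (y + t)) 0 := hk.comp_of_eq hadd (add_zero y)
    have hinner : AnalyticAt ℂ (fun t => inner ℂ d (e t)) 0 :=
      ((innerSL ℂ d).analyticAt _).comp
        ((hft.sub analyticAt_const).sub (analyticAt_id.smul analyticAt_const))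
    exact (hkt.sub (analyticAt_const.mul (analyticAt_const.mul analyticAt_id))).sub
      (analyticAt_const.mul hinner)
  have hh_zero : h 0 = k y := by simp [hh, he]
  have herror : ∀ᶠ t in 𝓝 (0 : ℂ), N * ‖e t‖ ^ 2 ≤ ε / 2 * ‖t‖ ^ 2 := by
    have hlittleO : e =o[𝓝 0] fun t => t :=
      hasDerivAt_iff_isLittleO_nhds_zero.1 hf.differentiableAt.hasDerivAt
    filter_upwards [((hlittleO.norm_norm.pow two_pos).const_mul_left N).def (half_pos hε)] with t ht
    simpa using (le_abs_self _).trans ht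
  have hpath : Tendsto (fun t : ℂ => (w + t • b, y + t)) (𝓝 0) (𝓝 (w, y)) := by
    simpa using (by fun_prop : Continuous fun t : ℂ => (w + t • b, y + t)).tendsto 0
  refine hu.not_eventually_le hD hw hh_analytic (half_pos hε) (b := b) ?_
  filter_upwards [herror, hpath.eventually hmax] with t ht hmaxt
  have hsplit : w + t • b - f (y + t) = d - e t := by simp only [hd, he]; abel
  have hnorm_d : ‖d - e t‖ ^ 2 = ‖d‖ ^ 2 - 2 * (inner ℂ d (e t)).re + ‖e t‖ ^ 2 :=
    norm_sub_sq (𝕜 := ℂ) d (e t)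
  have hnorm_y : ‖y + t‖ ^ 2 = ‖y‖ ^ 2 + 2 * (conj y * t).re + ‖t‖ ^ 2 := by
    simp only [Complex.sq_norm, Complex.normSq_apply, Complex.add_re, Complex.add_im,
      Complex.mul_re, Complex.conj_re, Complex.conj_im]
    ring
  simp only [hsplit, hnorm_d, hnorm_y, ← hd] at hmaxt
  rw [hh_zero]
  simp only [hh, Complex.sub_re, Complex.re_ofReal_mul]
  linarith

/-- Doubling of variables: a strict local maximum of `u ∘ f` minus a test function yields, for a
large penalty `N * ‖w - f y‖ ^ 2`, a local maximum in the independent variables `(w, y)`. -/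
lemma not_eventually_comp_lt {u : Cn n → ℝ} (hu : PSHOn (fun w => (u w : EReal)) D)
    (hD : IsOpen D) {f : ℂ → Cn n} {k : ℂ → ℂ} {x : ℂ} (hf : AnalyticAt ℂ f x) (hx : f x ∈ D)
    (hk : AnalyticAt ℂ k x) {ε : ℝ} (hε : 0 < ε) :
    ¬ ∀ᶠ y in 𝓝 x, y ≠ x →
      u (f y) + ε * ‖y‖ ^ 2 - (k y).re < u (f x) + ε * ‖x‖ ^ 2 - (k x).re := by
  intro hmax
  obtain ⟨r, hr, hball⟩ := nhds_basis_closedBall.eventually_iff.1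
    (hf.eventually_analyticAt.and (hk.eventually_analyticAt.and hmax))
  obtain ⟨r', hr', hball'⟩ := nhds_basis_closedBall.mem_iff.1 (hD.mem_nhds hx)
  set K : Set (Cn n × ℂ) := closedBall (f x) r' ×ˢ closedBall x r
  have hG_usc : UpperSemicontinuousOn
      (fun q : Cn n × ℂ => u q.1 + (ε * ‖q.2‖ ^ 2 - (k q.2).re)) K := fun q hq => by
    have hk_cont : ContinuousAt (fun q : Cn n × ℂ => (k q.2).re) q :=
      Complex.continuous_re.continuousAt.comp
        ((hball hq.2).2.1.continuousAt.comp continuousAt_snd)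
    have hsmooth : ContinuousAt (fun q : Cn n × ℂ => ε * ‖q.2‖ ^ 2 - (k q.2).re) q := by
      fun_prop
    exact (((hu.upperSemicontinuousAt hD (hball' hq.1)).comp continuousAt_fst).add
      hsmooth.upperSemicontinuousAt).upperSemicontinuousWithinAt K
  have hP_cont : ContinuousOn (fun q : Cn n × ℂ => ‖q.1 - f q.2‖ ^ 2) K := fun q hq =>
    ((continuousAt_fst.sub ((hball hq.2).1.continuousAt.comp continuousAt_snd)).norm.pow
      2).continuousWithinAt
  have hW : IsOpen (ball (f x) r' ×ˢ ball x r) := isOpen_ball.prod isOpen_ball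
  obtain ⟨N, q, ⟨hqK, hqW⟩, hqmax⟩ := exists_isMaxOn_sub_mul
    ((isCompact_closedBall _ _).prod (isCompact_closedBall _ _)) hG_usc hP_cont
    (fun _ _ => by positivity) hW (x₀ := (f x, x))
    ⟨mem_closedBall_self hr'.le, mem_closedBall_self hr.le⟩ (by simp) <| by
      rintro ⟨w, y⟩ ⟨hqK, hqW⟩ hq
      obtain rfl : w = f y := by simpa [sub_eq_zero] using hq
      simp only [← add_sub_assoc]
      exact (hball hqK.2).2.2 (by rintro rfl; exact hqW ⟨mem_ball_self hr', mem_ball_self hr⟩)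
  have hKq : K ∈ 𝓝 (q.1, q.2) := mem_of_superset (hW.mem_nhds hqW)
    (prod_mono ball_subset_closedBall ball_subset_closedBall)
  refine hu.not_isLocalMax_penalized hD (hball' hqK.1) (hball hqK.2).1 (hball hqK.2).2.1 hε N ?_
  simpa only [add_sub_assoc] using hqmax.isLocalMax hKq

lemma isSubharmonicAt_comp {u : Cn n → ℝ} (hu : PSHOn (fun w => (u w : EReal)) D)
    (hD : IsOpen D) {f : ℂ → Cn n} {x : ℂ} (hf : AnalyticAt ℂ f x) (hx : f x ∈ D) :
    IsSubharmonicAt (u ∘ f) x where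
  usc := (hu.upperSemicontinuousAt hD hx).comp hf.continuousAt
  not_isLocalMax k hk ε hε hmax := by
    -- trading half of `ε * ‖y‖ ^ 2` for `ε * Re (conj x * y)` makes the maximum strict
    refine hu.not_eventually_comp_lt (k := fun y => k y - (ε : ℝ) * (conj x * y)) hD hf hx
      (hk.sub (analyticAt_const.mul (analyticAt_const.mul analyticAt_id))) (half_pos hε) ?_
    filter_upwards [hmax] with y hy hyx
    have hpos : 0 < ε / 2 * ‖y - x‖ ^ 2 := by
      have := norm_pos_iff.2 (sub_ne_zero.2 hyx)
      positivity
    simp only [Complex.sub_re, Complex.sub_im, Complex.mul_re, Complex.conj_re, Complex.conj_im,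
      Complex.ofReal_re, Complex.ofReal_im, zero_mul, Complex.sq_norm, Complex.normSq_apply,
      Function.comp_apply]
      at hpos hy ⊢
    linarith

end PSHOn

section DifferenceQuotient

variable {E : Type*} [NormedAddCommGroup E]

lemma norm_smul_dslope_zero [NormedSpace ℂ E] (f : ℂ → E) (ζ : ℂ) :
    ‖ζ‖ * ‖dslope f 0 ζ‖ = dist (f ζ) (f 0) := by
  rw [dist_eq_norm, ← sub_smul_dslope f 0 ζ, sub_zero, norm_smul]

lemma log_sub_log_norm_le_log_dslope [NormedSpace ℂ E] {f : ℂ → E} {ζ : ℂ} {η : ℝ} (hη : 0 < η)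
    (h : η ≤ dist (f ζ) (f 0)) :
    Real.log η - Real.log ‖ζ‖ ≤ Real.log (1 + ‖dslope f 0 ζ‖ ^ 2) / 2 := by
  rw [← norm_smul_dslope_zero] at h
  obtain ⟨hζ, hg⟩ := mul_ne_zero_iff.1 (hη.trans_le h).ne'
  have hlog_mul := Real.log_le_log hη h
  rw [Real.log_mul hζ hg] at hlog_mul
  have hlog := Real.log_le_log (by positivity : 0 < ‖dslope f 0 ζ‖ ^ 2)
    (le_add_of_nonneg_left zero_le_one)
  rw [Real.log_pow, Nat.cast_ofNat] at hlog
  linarith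

lemma log_dslope_le_log_sub_log_norm [NormedSpace ℂ E] {f : ℂ → E} {ζ : ℂ} {ρ : ℝ} (hζ : ζ ≠ 0)
    (hζ1 : ‖ζ‖ ≤ 1) (h : dist (f ζ) (f 0) ≤ ρ) :
    Real.log (1 + ‖dslope f 0 ζ‖ ^ 2) / 2 ≤ Real.log (ρ + 1) - Real.log ‖ζ‖ := by
  have hρ : 0 ≤ ρ := dist_nonneg.trans h
  rw [← norm_smul_dslope_zero] at h
  have hle : ‖ζ‖ ^ 2 * (1 + ‖dslope f 0 ζ‖ ^ 2) ≤ (ρ + 1) ^ 2 := by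
    have := pow_le_one₀ (norm_nonneg ζ) hζ1 (n := 2)
    nlinarith [pow_le_pow_left₀ (by positivity) h 2]
  have hlog := Real.log_le_log (by positivity) hle
  rw [Real.log_mul (by positivity) (by positivity), Real.log_pow, Real.log_pow,
    Nat.cast_ofNat] at hlog
  linarith

/-- Where `f` is close to `p` the logarithmic pole of `S - log ‖·‖` is replaced by
`2 * S + log (1 + ‖g‖ ^ 2) / 2`, with `g` the difference quotient of `f` at `0`; the bounds on `S`
order the two functions correctly where they are glued. -/
lemma IsSubharmonicAt.le_log_norm_add [InnerProductSpace ℂ E] [CompleteSpace E] {S : ℂ → ℝ}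
    {f : ℂ → E} {p : E} {δ R t : ℝ} (hf : DifferentiableOn ℂ f (ball 0 1))
    (hS : ∀ y ∈ ball 0 1, IsSubharmonicAt S y) (ht : 0 ≤ t) (hSt : ∀ y ∈ ball 0 1, S y ≤ t)
    (hδ : 0 < δ) (hδR : δ ≤ R / 2) (hf0 : dist (f 0) p < δ / 4)
    (hnear : ∀ y ∈ ball 0 1, dist (f y) p < δ → -Real.log (δ / 4) ≤ S y)
    (hfar : ∀ y ∈ ball 0 1, R / 2 ≤ dist (f y) p → S y ≤ -Real.log (2 * R + 1))
    {ζ : ℂ} (hζ : ‖ζ‖ ≤ 1 / 2) (hζR : R ≤ dist (f ζ) p) :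
    S ζ ≤ Real.log ‖ζ‖ + (2 * t + Real.log (2 * R + 1) + Real.log 2) := by
  set g : ℂ → E := dslope f 0
  have hne {y : ℂ} (hy : δ / 4 ≤ dist (f y) p) : y ≠ 0 := by
    rintro rfl
    exact hf0.not_ge hy
  have hg : DifferentiableOn ℂ g (ball 0 1) :=
    (Complex.differentiableOn_dslope (ball_mem_nhds 0 one_pos)).2 hf
  have hg_le : ∀ y ∈ ball 0 1, y ≠ 0 → dist (f y) p < R →
      Real.log (1 + ‖g y‖ ^ 2) / 2 ≤ Real.log (2 * R + 1) - Real.log ‖y‖ := fun y hy hy0 hlt =>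
    log_dslope_le_log_sub_log_norm hy0 (mem_ball_zero_iff.1 hy).le
      (by linarith [dist_triangle_right (f y) (f 0) p])
  have hψ : ContinuousOn (fun y => dist (f y) p) (ball 0 1) :=
    (continuous_id.dist continuous_const).comp_continuousOn hf.continuousOn
  have hK : closedBall (0 : ℂ) (1 / 2) ⊆ ball 0 1 := closedBall_subset_ball (by norm_num)
  have hfrontier : ∀ y ∈ frontier (closedBall (0 : ℂ) (1 / 2)),
      y ∈ ball 0 1 ∧ y ≠ 0 ∧ Real.log ‖y‖ = -Real.log 2 := fun y hy => by
    have hy2 : ‖y‖ = 1 / 2 := by simpa using frontier_closedBall_subset_sphere hy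
    exact ⟨hK (mem_closedBall_zero_iff.2 hy2.le), norm_pos_iff.1 (by linarith),
      by rw [hy2, one_div, Real.log_inv]⟩
  have hlogR : 0 ≤ Real.log (2 * R + 1) := Real.log_nonneg (by linarith)
  have hbound := IsSubharmonicAt.le_of_forall_frontier_le_of_piecewise
    (A := fun y => S y + -1 * Real.log ‖y‖) (B := fun y => 2 * S y + Real.log (1 + ‖g y‖ ^ 2) / 2)
    (C := 2 * t + Real.log (2 * R + 1) + Real.log 2)
    (isCompact_closedBall 0 (1 / 2)) isOpen_ball hK hψ (half_lt_self hδ) hδR (by linarith)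
    (hB := fun y hy _ => ((hS y hy).const_mul two_pos).add_log_one_add_sq_norm
      (hg.analyticAt (isOpen_ball.mem_nhds hy)))
    (hA := fun y hy hyδ => (hS y hy).add_mul_log_norm (hne (by linarith)) _)
    (hAB := fun y hy hyδ' hyδ => by
      have := log_sub_log_norm_le_log_dslope (f := f) (ζ := y) (by positivity : 0 < δ / 4)
        (by linarith [dist_triangle (f y) (f 0) p])
      linarith [hnear y hy hyδ])
    (hBA := fun y hy hyr hyR => by
      linarith [hg_le y hy (hne (by linarith)) hyR, hfar y hy hyr.le])
    (hBC := fun y hy hyR => by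
      obtain ⟨hy1, hy0, hlog⟩ := hfrontier y hy
      linarith [hg_le y hy1 hy0 hyR, hSt y hy1])
    (hAC := fun y hy _ => by
      obtain ⟨hy1, -, hlog⟩ := hfrontier y hy
      linarith [hSt y hy1])
    (mem_closedBall_zero_iff.2 hζ) hζR
  linarith

end DifferenceQuotient

/-- A holomorphic map from the open unit disc into `D`, encoded as a total function whose values
outside the disc are irrelevant. -/
structure IsAnalyticDisc {E : Type*} [NormedAddCommGroup E] [NormedSpace ℂ E] (f : ℂ → E)
    (D : Set E) : Prop where
  differentiableOn : DifferentiableOn ℂ f (ball 0 1)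
  mapsTo : MapsTo f (ball 0 1) D

namespace IsAnalyticDisc

variable {E : Type*} [NormedAddCommGroup E] [NormedSpace ℂ E] {f : ℂ → E} {D : Set E}

lemma analyticAt [CompleteSpace E] (hf : IsAnalyticDisc f D) {x : ℂ} (hx : x ∈ ball 0 1) :
    AnalyticAt ℂ f x :=
  hf.differentiableOn.analyticAt (isOpen_ball.mem_nhds hx)

lemma comp (hf : IsAnalyticDisc f D) {g : ℂ → ℂ} (hg : IsAnalyticDisc g (ball 0 1)) :
    IsAnalyticDisc (f ∘ g) D where
  differentiableOn := hf.differentiableOn.comp hg.differentiableOn hg.mapsTo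
  mapsTo := hf.mapsTo.comp hg.mapsTo

lemma mono (hf : IsAnalyticDisc f D) {D' : Set E} (h : D ⊆ D') : IsAnalyticDisc f D' where
  differentiableOn := hf.differentiableOn
  mapsTo := hf.mapsTo.mono_right h

lemma comp_mul_left {r : ℝ} (hf : DifferentiableOn ℂ f (ball 0 r)) (hfD : MapsTo f (ball 0 r) D)
    (hr : 0 < r) : IsAnalyticDisc (fun ζ => f (r * ζ)) D := by
  have hmaps : MapsTo (fun ζ : ℂ => (r : ℂ) * ζ) (ball 0 1) (ball 0 r) := fun ζ hζ => by
    rw [mem_ball_zero_iff] at hζ ⊢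
    rw [norm_mul, Complex.norm_real, Real.norm_of_nonneg hr.le]
    exact mul_lt_of_lt_one_right hr hζ
  exact ⟨hf.comp (by fun_prop) hmaps, hfD.comp hmaps⟩

end IsAnalyticDisc

/-- The involutive automorphism of the unit disc exchanging `0` and `l`. -/
def discInvolution (l ζ : ℂ) : ℂ := (l - ζ) / (1 - conj l * ζ)

lemma discInvolution_zero (l : ℂ) : discInvolution l 0 = l := by simp [discInvolution]

lemma discInvolution_self (l : ℂ) : discInvolution l l = 0 := by simp [discInvolution]

lemma isAnalyticDisc_discInvolution {l : ℂ} (hl : ‖l‖ < 1) :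
    IsAnalyticDisc (discInvolution l) (ball 0 1) := by
  have hpos {ζ : ℂ} (hζ : ‖ζ‖ < 1) : 0 < (1 - ‖l‖ ^ 2) * (1 - ‖ζ‖ ^ 2) :=
    mul_pos (sub_pos.2 (pow_lt_one₀ (norm_nonneg _) hl two_ne_zero))
      (sub_pos.2 (pow_lt_one₀ (norm_nonneg _) hζ two_ne_zero))
  have hidentity (ζ : ℂ) :
      ‖1 - conj l * ζ‖ ^ 2 - ‖l - ζ‖ ^ 2 = (1 - ‖l‖ ^ 2) * (1 - ‖ζ‖ ^ 2) := by
    simp only [Complex.sq_norm, Complex.normSq_apply, Complex.sub_re, Complex.sub_im,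
      Complex.mul_re, Complex.mul_im, Complex.conj_re, Complex.conj_im, Complex.one_re,
      Complex.one_im]
    ring
  have hlt {ζ : ℂ} (hζ : ‖ζ‖ < 1) : ‖l - ζ‖ < ‖1 - conj l * ζ‖ :=
    lt_of_pow_lt_pow_left₀ 2 (norm_nonneg _) (by linarith [hpos hζ, hidentity ζ])
  have hden {ζ : ℂ} (hζ : ‖ζ‖ < 1) : 0 < ‖1 - conj l * ζ‖ := (norm_nonneg _).trans_lt (hlt hζ)
  constructor
  · refine DifferentiableOn.div (by fun_prop) (by fun_prop) fun ζ hζ => ?_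
    exact norm_pos_iff.1 (hden (mem_ball_zero_iff.1 hζ))
  · intro ζ hζ
    rw [mem_ball_zero_iff] at hζ ⊢
    rw [discInvolution, norm_div, div_lt_one (hden hζ)]
    exact hlt hζ

lemma IsAnalyticDisc.comp_discInvolution_notMem {E : Type*} [NormedAddCommGroup E]
    [NormedSpace ℂ E] {f : ℂ → E} {D U V : Set E} (hf : IsAnalyticDisc f D) {κ : ℝ} (hκ : κ ≤ 1)
    (hκU : ∀ f, IsAnalyticDisc f D → f 0 ∈ V → MapsTo f (ball 0 κ) U) {l μ : ℂ} (hl : ‖l‖ < 1)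
    (hlU : f l ∉ U) (hμ : μ ∈ ball 0 κ) : (f ∘ discInvolution l) μ ∉ V := by
  intro hμV
  have hμ1 : ‖μ‖ < 1 := (mem_ball_zero_iff.1 hμ).trans_le hκ
  have hmem := hκU _ ((hf.comp (isAnalyticDisc_discInvolution hl)).comp
    (isAnalyticDisc_discInvolution hμ1)) (by rwa [Function.comp_apply, discInvolution_zero]) hμ
  refine hlU ?_
  rwa [Function.comp_apply, discInvolution_self, Function.comp_apply, discInvolution_zero] at hmem

namespace PSHOn

variable {n : ℕ} {D : Set (Cn n)} {u : Cn n → ℝ}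

lemma exists_forall_mapsTo_ball (hu : PSHOn (fun w => (u w : EReal)) D) (hD : IsOpen D)
    (hnonpos : ∀ w ∈ D, u w ≤ 0) {b : ℝ} (hb : ∀ w ∈ D, b ≤ u w) {p : Cn n} {c δ R : ℝ}
    (hc : 0 < c) (hδ : 0 < δ) (hδR : δ ≤ R / 2) (hnear : ∀ w ∈ D, dist w p < δ → -(c / 4) ≤ u w)
    (hfar : ∀ w ∈ D, R / 2 ≤ dist w p → u w ≤ -c) :
    ∃ κ ∈ Ioo (0 : ℝ) 1, ∀ f, IsAnalyticDisc f D → dist (f 0) p < δ / 4 →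
      MapsTo f (ball 0 κ) (ball p R) := by
  obtain ⟨M, hM, hMδ, hMR⟩ :
      ∃ M > 0, -Real.log (δ / 4) ≤ M * (c / 4) ∧ Real.log (2 * R + 1) ≤ M * (c / 2) :=
    ((eventually_gt_atTop 0).and
      (((tendsto_id.atTop_mul_const (by positivity)).eventually_ge_atTop _).and
        ((tendsto_id.atTop_mul_const (by positivity)).eventually_ge_atTop _))).exists
  set C := M * (c / 2 - b) + Real.log (2 * R + 1) + Real.log 2 with hC
  refine ⟨min (1 / 2) (Real.exp (-C)), ⟨by positivity, by norm_num⟩, fun f hf hf0 ζ hζ => ?_⟩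
  obtain ⟨hζ2, hζC⟩ := lt_min_iff.1 (mem_ball_zero_iff.1 hζ)
  by_contra hζR
  rw [mem_ball, not_lt] at hζR
  have hζ1 : ζ ∈ ball 0 1 := mem_ball_zero_iff.2 (by linarith)
  have hζ0 : ζ ≠ 0 := by
    rintro rfl
    linarith
  have hle := IsSubharmonicAt.le_log_norm_add (S := fun y => M * (u (f y) + c / 2))
    (t := M * (c / 2)) hf.differentiableOn
    (fun y hy => ((hu.isSubharmonicAt_comp hD (hf.analyticAt hy) (hf.mapsTo hy)).add_const
      (c / 2)).const_mul hM) (by positivity)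
    (fun y hy => by gcongr; linarith [hnonpos _ (hf.mapsTo hy)]) hδ hδR hf0
    (fun y hy hyδ => hMδ.trans (by gcongr; linarith [hnear _ (hf.mapsTo hy) hyδ]))
    (fun y hy hyR => by nlinarith [hfar _ (hf.mapsTo hy) hyR]) hζ2.le hζR
  have hlog := (Real.log_lt_iff_lt_exp (norm_pos_iff.2 hζ0)).2 hζC
  have := mul_le_mul_of_nonneg_left (hb _ (hf.mapsTo hζ1)) hM.le
  linarith

/-- Recentre the disc at a point `l` sent outside `U`: by hypothesis a fixed concentric disc is then
sent outside `V`, where `u ≤ -c`, so the maximum principle on the remaining annulus bounds `u` at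
the old centre by a multiple of `log ‖l‖`. -/
lemma mapsTo_ball_exp (hu : PSHOn (fun w => (u w : EReal)) D) (hD : IsOpen D)
    (hnonpos : ∀ w ∈ D, u w ≤ 0) {U V : Set (Cn n)} {c κ : ℝ} (hc : 0 < c)
    (hV : ∀ w ∈ D \ V, u w ≤ -c) (hκ : κ ∈ Ioo 0 1)
    (hκU : ∀ f, IsAnalyticDisc f D → f 0 ∈ V → MapsTo f (ball 0 κ) U) {f : ℂ → Cn n}
    (hf : IsAnalyticDisc f D) (hf0 : f 0 ∈ V) :
    MapsTo f (ball 0 (Real.exp (Real.log (2 / κ) / c * u (f 0)))) U := by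
  intro l hl
  by_contra hlU
  obtain ⟨hκ0, hκ1⟩ := hκ
  set L := Real.log (2 / κ) with hL
  have hL0 : 0 < L := Real.log_pos (by rw [lt_div_iff₀ hκ0]; linarith)
  rw [mem_ball_zero_iff] at hl
  have hl1 : ‖l‖ < 1 := hl.trans_le <| Real.exp_le_one_iff.2 <|
    mul_nonpos_of_nonneg_of_nonpos (by positivity) (hnonpos _ (hf.mapsTo (mem_ball_self one_pos)))
  set F := f ∘ discInvolution l with hF
  have hF_disc : IsAnalyticDisc F D := hf.comp (isAnalyticDisc_discInvolution hl1)
  have hFl : F l = f 0 := by rw [hF, Function.comp_apply, discInvolution_self]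
  have hFV : ∀ μ ∈ ball 0 κ, F μ ∉ V := fun μ hμ =>
    hf.comp_discInvolution_notMem hκ1.le hκU hl1 hlU hμ
  have hlκ : κ ≤ ‖l‖ := by
    by_contra! h
    exact hFV l (mem_ball_zero_iff.2 h) (hFl ▸ hf0)
  have hlog_half : c / L * Real.log (κ / 2) = -c := by
    have : Real.log (κ / 2) = -L := by rw [hL, ← Real.log_inv, inv_div]
    rw [this]
    field_simp
  have hbound : u (f 0) ≤ c / L * Real.log ‖l‖ := by
    rw [← hFl]
    refine IsSubharmonicAt.le_mul_log_norm (S := u ∘ F) (half_pos hκ0) (by positivity)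
      (fun y hy => hu.isSubharmonicAt_comp hD (hF_disc.analyticAt hy) (hF_disc.mapsTo hy))
      (fun y hy => hnonpos _ (hF_disc.mapsTo hy)) (fun y hy hyκ => ?_) (by linarith) hl1
    rw [hlog_half]
    exact hV _ ⟨hF_disc.mapsTo hy, hFV y (mem_ball_zero_iff.2 (by linarith))⟩
  rw [← Real.log_lt_iff_lt_exp (hκ0.trans_le hlκ), div_mul_eq_mul_div, lt_div_iff₀ hc] at hl
  rw [div_mul_eq_mul_div, le_div_iff₀ hL0] at hbound
  linarith

lemma congr {φ ψ : Cn n → EReal} (hφ : PSHOn φ D) (h : EqOn φ ψ D) : PSHOn ψ D := by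
  refine ⟨fun w hw t ht => ?_, fun a ha b r hr hD g hg hle => ?_⟩
  · filter_upwards [hφ.1 w hw t ((h hw).trans_lt ht), self_mem_nhdsWithin] with y hy hyD
    exact (h hyD).symm.trans_lt hy
  · rw [← h ha]
    refine hφ.2 a ha b r hr hD g hg fun θ => (h (hD _ ?_)).trans_le (hle θ)
    simp [Complex.norm_exp_ofReal_mul_I, abs_of_pos hr]

lemma max_const {φ : Cn n → EReal} (hφ : PSHOn φ D) (c : ℝ) :
    PSHOn (fun w => max (φ w) c) D := by
  refine ⟨hφ.1.sup upperSemicontinuousOn_const, fun a ha b r hr hD g hg hle => max_le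
    (hφ.2 a ha b r hr hD g hg fun θ => (le_max_left _ _).trans (hle θ)) ?_⟩
  have hmean := intervalIntegral.integral_mono_on Real.two_pi_pos.le
    (intervalIntegrable_const (μ := MeasureTheory.volume)) (hg.intervalIntegrable 0 (2 * Real.pi))
    fun θ _ => EReal.coe_le_coe_iff.1 ((le_max_right _ _).trans (hle θ))
  rw [intervalIntegral.integral_const, sub_zero, smul_eq_mul] at hmean
  rwa [EReal.coe_le_coe_iff, one_div_mul_eq_div, le_div_iff₀' Real.two_pi_pos]

end PSHOn

namespace IsPshPeakFn

variable {n : ℕ} {D : Set (Cn n)} {p : Cn n} {φ : Cn n → EReal}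

lemma lt_zero (hφ : IsPshPeakFn D p φ) (hp : p ∉ D) {w : Cn n} (hw : w ∈ D) : φ w < 0 := by
  obtain ⟨c, hc, hle⟩ := hφ.2.2 {w}ᶜ (isOpen_ne.mem_nhds (by rintro rfl; exact hp hw))
  exact (hle w ⟨hw, by simp⟩).trans_lt (EReal.coe_lt_coe_iff.2 hc)

lemma congr {ψ : Cn n → EReal} (hφ : IsPshPeakFn D p φ) (h : EqOn φ ψ D) : IsPshPeakFn D p ψ := by
  refine ⟨hφ.1.congr h, hφ.2.1.congr' (h.eventuallyEq_nhdsWithin), fun U hU => ?_⟩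
  obtain ⟨c, hc, hle⟩ := hφ.2.2 U hU
  exact ⟨c, hc, fun w hw => (h hw.1).symm.trans_le (hle w hw)⟩

lemma max_const (hφ : IsPshPeakFn D p φ) {c : ℝ} (hc : c < 0) :
    IsPshPeakFn D p (fun w => max (φ w) c) := by
  refine ⟨hφ.1.max_const c, ?_, fun U hU => ?_⟩
  · have := hφ.2.1.max (tendsto_const_nhds (x := (c : EReal)))
    rwa [max_eq_left (EReal.coe_neg'.2 hc).le] at this
  · obtain ⟨c', hc', hle⟩ := hφ.2.2 U hU
    exact ⟨max c' c, max_lt hc' hc, fun w hw => max_le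
      ((hle w hw).trans (EReal.coe_le_coe_iff.2 (le_max_left _ _)))
      (EReal.coe_le_coe_iff.2 (le_max_right _ _))⟩

lemma exists_real_mem_Icc (hφ : IsPshPeakFn D p φ) (hp : p ∉ D) : ∃ u : Cn n → ℝ,
    IsPshPeakFn D p (fun w => (u w : EReal)) ∧ ∀ w ∈ D, φ w ≤ u w ∧ u w ∈ Icc (-1) 0 := by
  have hcoe : EqOn (fun w => max (φ w) (-1 : ℝ))
      (fun w => ((max (φ w) (-1 : ℝ)).toReal : EReal)) D := fun w hw =>
    (EReal.coe_toReal (max_lt ((hφ.lt_zero hp hw).trans EReal.zero_lt_top)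
      (EReal.coe_lt_top _)).ne ((EReal.bot_lt_coe _).trans_le (le_max_right _ _)).ne').symm
  refine ⟨_, (hφ.max_const neg_one_lt_zero).congr hcoe, fun w hw => ⟨?_, ?_, ?_⟩⟩
  · exact (le_max_left _ _).trans_eq (hcoe hw)
  · exact EReal.coe_le_coe_iff.1 ((le_max_right _ _).trans_eq (hcoe hw))
  · exact EReal.coe_le_coe_iff.1
      ((hcoe hw).symm.trans_le (max_le (hφ.lt_zero hp hw).le (EReal.coe_le_coe_iff.2 (by simp))))

lemma exists_mapsTo_ball_exp {u : Cn n → ℝ} (hu : IsPshPeakFn D p (fun w => (u w : EReal)))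
    (hD : IsOpen D) (hnonpos : ∀ w ∈ D, u w ≤ 0) {b : ℝ} (hb : ∀ w ∈ D, b ≤ u w)
    {U : Set (Cn n)} (hU : U ∈ 𝓝 p) :
    ∃ V, IsOpen V ∧ p ∈ V ∧ V ⊆ U ∧ ∃ m : ℝ, 0 < m ∧ ∀ f, IsAnalyticDisc f D → f 0 ∈ V →
      MapsTo f (ball 0 (Real.exp (m * u (f 0)))) U := by
  obtain ⟨R, hR, hRU⟩ := Metric.mem_nhds_iff.1 hU
  obtain ⟨c, hc, hfar⟩ := hu.2.2 _ (ball_mem_nhds p (half_pos hR))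
  obtain ⟨δ, hδ, hnear⟩ : ∃ δ > 0, ∀ w ∈ D, dist w p < δ → c / 4 < u w := by
    have := hu.2.1.eventually (lt_mem_nhds (EReal.coe_neg'.2 (by linarith : c / 4 < 0)))
    simp only [EReal.coe_lt_coe_iff] at this
    obtain ⟨δ, hδ, hball⟩ := Metric.mem_nhdsWithin_iff.1 this
    exact ⟨δ, hδ, fun w hw hwδ => hball ⟨hwδ, hw⟩⟩
  set δ' := min δ (R / 2)
  have hδ' : 0 < δ' := lt_min hδ (half_pos hR)
  have hδ'R : δ' ≤ R / 2 := min_le_right _ _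
  obtain ⟨κ, hκ, hκR⟩ := hu.1.exists_forall_mapsTo_ball hD hnonpos hb (neg_pos.2 hc) hδ' hδ'R
    (fun w hw hwδ => by linarith [hnear w hw (hwδ.trans_le (min_le_left _ _))])
    (fun w hw hwR => by
      simpa using EReal.coe_le_coe_iff.1 (hfar w ⟨hw, fun h => (mem_ball.1 h).not_ge hwR⟩))
  obtain ⟨c', hc', hV⟩ := hu.2.2 _ (ball_mem_nhds p (by positivity : 0 < δ' / 4))
  refine ⟨ball p (δ' / 4), isOpen_ball, mem_ball_self (by positivity),
    (ball_subset_ball (by linarith)).trans hRU, Real.log (2 / κ) / -c', ?_, fun f hf hf0 => ?_⟩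
  · exact div_pos (Real.log_pos (by rw [lt_div_iff₀ hκ.1]; linarith [hκ.2])) (neg_pos.2 hc')
  · exact (hu.1.mapsTo_ball_exp hD hnonpos (neg_pos.2 hc')
      (fun w hw => by simpa using EReal.coe_le_coe_iff.1 (hV w hw)) hκ
      (fun f hf hf0 => (hκR f hf hf0).mono_right hRU) hf hf0)

end IsPshPeakFn

section Kobayashi

variable {n : ℕ} {D U : Set (Cn n)} {z X : Cn n}

lemma kobayashi_nonneg (D : Set (Cn n)) (z X : Cn n) : 0 ≤ kobayashi D z X := by
  refine Real.sInf_nonneg ?_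
  rintro _ ⟨α, rfl, -⟩
  exact norm_nonneg α

lemma kobayashi_le_norm {f : ℂ → Cn n} (hf : IsAnalyticDisc f D) (α : ℂ) :
    kobayashi D (f 0) (α • deriv f 0) ≤ ‖α‖ := by
  refine csInf_le ⟨0, ?_⟩ ⟨α, rfl, f, hf.differentiableOn, hf.mapsTo, rfl, rfl⟩
  rintro _ ⟨β, rfl, -⟩
  exact norm_nonneg β

lemma kobayashi_eq_zero_of_forall_ne
    (h : ∀ f, IsAnalyticDisc f D → f 0 = z → ∀ α : ℂ, α • deriv f 0 ≠ X) :
    kobayashi D z X = 0 := by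
  refine (congrArg sInf (eq_empty_of_forall_notMem ?_)).trans Real.sInf_empty
  rintro _ ⟨α, rfl, f, hf, hfD, hf0, hα⟩
  exact h f ⟨hf, hfD⟩ hf0 α hα

lemma mul_kobayashi_inter_le {r : ℝ} (hr : 0 < r) (hr1 : r ≤ 1)
    (h : ∀ f, IsAnalyticDisc f D → f 0 = z → MapsTo f (ball 0 r) U) :
    r * kobayashi (D ∩ U) z X ≤ kobayashi D z X := by
  by_cases hX : ∃ f, IsAnalyticDisc f D ∧ f 0 = z ∧ ∃ α : ℂ, α • deriv f 0 = X
  · obtain ⟨f, hf, hf0, α, hα⟩ := hX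
    refine le_csInf ⟨_, α, rfl, f, hf.differentiableOn, hf.mapsTo, hf0, hα⟩ ?_
    rintro _ ⟨α, rfl, f, hf, hfD, rfl, rfl⟩
    have hball : ball (0 : ℂ) r ⊆ ball 0 1 := ball_subset_ball hr1
    have hscaled : IsAnalyticDisc (fun ζ => f (r * ζ)) (D ∩ U) :=
      .comp_mul_left (hf.mono hball) (fun ζ hζ => ⟨hfD (hball hζ), h f ⟨hf, hfD⟩ rfl hζ⟩) hr
    have hderiv : (α / r) • deriv (fun ζ : ℂ => f (r * ζ)) 0 = α • deriv f 0 := by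
      rw [deriv_comp_mul_left, mul_zero, smul_smul,
        div_mul_cancel₀ _ (Complex.ofReal_ne_zero.2 hr.ne')]
    have hle := kobayashi_le_norm hscaled (α / r)
    rwa [hderiv, mul_zero, norm_div, Complex.norm_real, Real.norm_of_nonneg hr.le,
      le_div_iff₀' hr] at hle
  · rw [kobayashi_eq_zero_of_forall_ne fun f hf hf0 α hα =>
      hX ⟨f, hf.mono inter_subset_left, hf0, α, hα⟩, mul_zero]
    exact kobayashi_nonneg D z X

end Kobayashi

lemma erexp_le_exp {x : EReal} {t : ℝ} (h : x ≤ t) : erexp x ≤ Real.exp t := by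
  induction x with
  | bot => simpa [erexp] using (Real.exp_pos t).le
  | top => exact absurd h (EReal.coe_lt_top t).not_ge
  | coe x => simpa [erexp] using h

theorem kobayashi_localization_peak_general {n : ℕ} {D : Set (Cn n)} (hD : IsOpen D) {p : Cn n}
    (hp : p ∉ D) {φ : Cn n → EReal} (hφ : IsPshPeakFn D p φ) {U : Set (Cn n)} (hU : U ∈ 𝓝 p) :
    ∃ V : Set (Cn n), IsOpen V ∧ p ∈ V ∧ V ⊆ U ∧ ∃ m : ℝ, 0 < m ∧
      ∀ z ∈ D ∩ V, ∀ X : Cn n,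
        kobayashi D z X ≥ erexp ((m : EReal) * φ z) * kobayashi (D ∩ U) z X := by
  obtain ⟨u, hu, hφu⟩ := hφ.exists_real_mem_Icc hp
  obtain ⟨V, hV, hpV, hVU, m, hm, hdiscs⟩ := hu.exists_mapsTo_ball_exp hD
    (fun w hw => (hφu w hw).2.2) (fun w hw => (hφu w hw).2.1) hU
  refine ⟨V, hV, hpV, hVU, m, hm, fun z ⟨hzD, hzV⟩ X => ?_⟩
  have hexp : erexp (m * φ z) ≤ Real.exp (m * u z) := erexp_le_exp <| by
    rw [EReal.coe_mul]
    exact mul_le_mul_of_nonneg_left (hφu z hzD).1 (EReal.coe_nonneg.2 hm.le)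
  have hexp_le_one : Real.exp (m * u z) ≤ 1 :=
    Real.exp_le_one_iff.2 (mul_nonpos_of_nonneg_of_nonpos hm.le (hφu z hzD).2.2)
  calc erexp (m * φ z) * kobayashi (D ∩ U) z X
      ≤ Real.exp (m * u z) * kobayashi (D ∩ U) z X :=
        mul_le_mul_of_nonneg_right hexp (kobayashi_nonneg _ _ _)
    _ ≤ kobayashi D z X := mul_kobayashi_inter_le (Real.exp_pos _) hexp_le_one <| by
        rintro f hf rfl
        exact hdiscs f hf hzV

/-- Quantitative localization of the Kobayashi metric near a psh peak
boundary point. -/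
theorem kobayashi_localization_peak {n : ℕ} (D : Set (Cn n)) (hD : IsOpen D)
    (hDconn : IsConnected D) (p : Cn n) (hp : p ∈ frontier D)
    (φ : Cn n → EReal) (hφ : IsPshPeakFn D p φ)
    (U : Set (Cn n)) (hU : IsOpen U) (hUb : Bornology.IsBounded U) (hpU : p ∈ U) :
    ∃ V : Set (Cn n), IsOpen V ∧ p ∈ V ∧ V ⊆ U ∧ ∃ m : ℝ, 0 < m ∧
      ∀ z ∈ D ∩ V, ∀ X : Cn n,
        kobayashi D z X ≥ erexp ((m : EReal) * φ z) * kobayashi (D ∩ U) z X :=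
  kobayashi_localization_peak_general hD (hD.frontier_eq ▸ hp).2 hφ (hU.mem_nhds hpU)
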